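/- Let α, β ≥ 0 with (α, β) ≠ (0, 0). Then there exist constants c₁, c₂ > 0, depending only on α, β, such that for all 0 < δ < 1/4: c₁·δ²·|ln δ| ≤ sup_{f ∈ B_∞^{α,β} ∩ M²} ω_φ²(f, δ)_{w_{α,β}, 1} ≤ c₂·δ²·|ln δ|. -/

import Mathlib

open MeasureTheory Set Filter
open scoped ENNReal

noncomputable section

/-- The Jacobi weight `w_{α,β}(x) = (1+x)^α (1-x)^β`. -/
def jacobi (α β : ℝ) (x : ℝ) : ℝ := (1 + x) ^ α * (1 - x) ^ β

/-- `φ(x) = √(1-x²)`. -/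
def phiW (x : ℝ) : ℝ := Real.sqrt (1 - x ^ 2)

/-- The `L^p` norm of `g` on the interval `[a,b]` (essential sup when `p = ∞`). -/
def LpOn (g : ℝ → ℝ) (p : ℝ≥0∞) (a b : ℝ) : ℝ≥0∞ :=
  eLpNorm g p (volume.restrict (Icc a b))

/-- The `k`-th symmetric difference `Δ_h^k(f,x)` relative to `[-1,1]`. -/
def symmDelta (k : ℕ) (h : ℝ) (f : ℝ → ℝ) (x : ℝ) : ℝ :=
  if (x - k * h / 2 ∈ Icc (-1 : ℝ) 1 ∧ x + k * h / 2 ∈ Icc (-1 : ℝ) 1) then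
    ∑ i ∈ Finset.range (k + 1), ((k.choose i : ℝ) * (-1 : ℝ) ^ (k - i) * f (x - k * h / 2 + i * h))
  else 0

/-- Main-part weighted modulus `Ω_φ^k(f,δ)_{w,p}`. -/
def OmegaMain (k : ℕ) (f : ℝ → ℝ) (δ : ℝ) (wt : ℝ → ℝ) (p : ℝ≥0∞) : ℝ≥0∞ :=
  ⨆ h ∈ Ioc (0 : ℝ) δ,
    LpOn (fun x => wt x * symmDelta k (h * phiW x) f x) p
      (-1 + 2 * (k : ℝ) ^ 2 * h ^ 2) (1 - 2 * (k : ℝ) ^ 2 * h ^ 2)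

/-- Forward part `Ω→_φ^k(f,δ)_{w,p}`. -/
def OmegaFwd (k : ℕ) (f : ℝ → ℝ) (δ : ℝ) (wt : ℝ → ℝ) (p : ℝ≥0∞) : ℝ≥0∞ :=
  ⨆ h ∈ Ioc (0 : ℝ) (2 * (k : ℝ) ^ 2 * δ ^ 2),
    LpOn (fun x => wt x * symmDelta k h f (x + k * h / 2)) p
      (-1) (-1 + 2 * (k : ℝ) ^ 2 * δ ^ 2)

/-- Backward part `Ω←_φ^k(f,δ)_{w,p}`. -/
def OmegaBwd (k : ℕ) (f : ℝ → ℝ) (δ : ℝ) (wt : ℝ → ℝ) (p : ℝ≥0∞) : ℝ≥0∞ :=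
  ⨆ h ∈ Ioc (0 : ℝ) (2 * (k : ℝ) ^ 2 * δ ^ 2),
    LpOn (fun x => wt x * symmDelta k h f (x - k * h / 2)) p
      (1 - 2 * (k : ℝ) ^ 2 * δ ^ 2) 1

/-- Weighted Ditzian–Totik modulus `ω_φ^k(f,δ)_{w,p}`. -/
def omegaDT (k : ℕ) (f : ℝ → ℝ) (δ : ℝ) (wt : ℝ → ℝ) (p : ℝ≥0∞) : ℝ≥0∞ :=
  OmegaMain k f δ wt p + OmegaFwd k f δ wt p + OmegaBwd k f δ wt p

/-- `f` is `k`-monotone on `(-1,1)`: all `k`-th divided differences over `k+1` distinct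
points of `(-1,1)` are nonnegative. -/
def kMonotoneOn (k : ℕ) (f : ℝ → ℝ) : Prop :=
  ∀ x : Fin (k + 1) → ℝ, Function.Injective x → (∀ i, x i ∈ Ioo (-1 : ℝ) 1) →
    0 ≤ ∑ i, f (x i) / ∏ j ∈ Finset.univ.erase i, (x i - x j)

/-- `M^k`, the class of `k`-monotone functions on `(-1,1)`. -/
def MSet (k : ℕ) : Set (ℝ → ℝ) := {f | kMonotoneOn k f}

/-- `M_+^k`, the `k`-monotone functions on `(-1,1)` vanishing on `(-1,0]`. -/
def MPlus (k : ℕ) : Set (ℝ → ℝ) :=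
  {f | kMonotoneOn k f ∧ ∀ x : ℝ, -1 < x → x ≤ 0 → f x = 0}

/-- `J_p = (-1/p, ∞)` for finite `p`, `[0,∞)` for `p = ∞`. -/
def Jset (p : ℝ≥0∞) : Set ℝ := if p = ∞ then Ici 0 else Ioi (-1 / p.toReal)

/-- `W_p^{α,β}`. -/
def WSet (p : ℝ≥0∞) (α β : ℝ) : Set (ℝ → ℝ) :=
  {f | Measurable f ∧ LpOn (fun x => jacobi α β x * f x) p (-1) 1 ≠ ⊤}

/-- `B_p^{α,β}`, the unit sphere of `W_p^{α,β}`. -/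
def BSet (p : ℝ≥0∞) (α β : ℝ) : Set (ℝ → ℝ) :=
  {f | Measurable f ∧ LpOn (fun x => jacobi α β x * f x) p (-1) 1 = 1}

/-- Best weighted approximation `E_n(f)_{w,q}` by polynomials of degree at most `n`. -/
def En (n : ℕ) (f : ℝ → ℝ) (wt : ℝ → ℝ) (q : ℝ≥0∞) : ℝ≥0∞ :=
  ⨅ P ∈ {P : Polynomial ℝ | P.natDegree ≤ n},
    LpOn (fun x => wt x * (f x - P.eval x)) q (-1) 1

/-- `E(X, P_n)_{w,q}`. -/
def EClass (X : Set (ℝ → ℝ)) (n : ℕ) (wt : ℝ → ℝ) (q : ℝ≥0∞) : ℝ≥0∞ :=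
  ⨆ f ∈ X, En n f wt q

lemma symm2 (h : ℝ) (f : ℝ → ℝ) (x : ℝ) : symmDelta 2 h f x =
    if (x - h ∈ Icc (-1 : ℝ) 1 ∧ x + h ∈ Icc (-1 : ℝ) 1) then f (x - h) - 2 * f x + f (x + h) else 0 := by
  have e1 : (2 : ℝ) * h / 2 = h := by ring
  have e2 : x - h + 2 * h = x + h := by ring
  unfold symmDelta
  simp only [Nat.cast_ofNat, e1]
  congr 1
  simp [Finset.sum_range_succ, e2]
  ring

lemma dd_nonneg {f : ℝ → ℝ} (hf : ConvexOn ℝ (Ioo (-1) 1) f) {a b c : ℝ} (ha : a ∈ Ioo (-1 : ℝ) 1)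
    (hc : c ∈ Ioo (-1 : ℝ) 1) (hab : a < b) (hbc : b < c) :
    0 ≤ f a / ((a - b) * (a - c)) + f b / ((b - a) * (b - c)) + f c / ((c - a) * (c - b)) := by
  have h := hf.slope_mono_adjacent ha hc hab hbc
  have h1 : 0 < b - a := by linarith
  have h2 : 0 < c - b := by linarith
  have h3 : 0 < c - a := by linarith
  have e : f a / ((a - b) * (a - c)) + f b / ((b - a) * (b - c)) + f c / ((c - a) * (c - b))
      = ((f c - f b) / (c - b) - (f b - f a) / (b - a)) / (c - a) := by
    have : a - b ≠ 0 := by linarith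
    have : a - c ≠ 0 := by linarith
    have : b - c ≠ 0 := by linarith
    have := h1.ne'
    have := h2.ne'
    have := h3.ne'
    rw [show a - b = -(b - a) by ring, show a - c = -(c - a) by ring, show b - c = -(c - b) by ring]
    field_simp
    ring
  rw [e]
  exact div_nonneg (by linarith) h3.le

lemma kmono_sum (f : ℝ → ℝ) (x : Fin 3 → ℝ) :
    ∑ i, f (x i) / ∏ j ∈ Finset.univ.erase i, (x i - x j) =
    f (x 0) / ((x 0 - x 1) * (x 0 - x 2)) + f (x 1) / ((x 1 - x 0) * (x 1 - x 2))
      + f (x 2) / ((x 2 - x 0) * (x 2 - x 1)) := by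
  have h0 : (Finset.univ : Finset (Fin 3)).erase 0 = {1, 2} := by decide
  have h1 : (Finset.univ : Finset (Fin 3)).erase 1 = {0, 2} := by decide
  have h2 : (Finset.univ : Finset (Fin 3)).erase 2 = {0, 1} := by decide
  simp [Fin.sum_univ_three, h0, h1, h2]

lemma kmono_iff (f : ℝ → ℝ) : kMonotoneOn 2 f ↔ ConvexOn ℝ (Ioo (-1) 1) f := by
  constructor
  · intro hk
    apply convexOn_of_slope_mono_adjacent (convex_Ioo _ _)
    intro x y z hx hz hxy hyz
    have := hk ![x, y, z] (by
      intro i j hij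
      fin_cases i <;> fin_cases j <;> simp at hij ⊢ <;> linarith) (by
      intro i
      fin_cases i
      · exact hx
      · exact ⟨hx.1.trans hxy, hyz.trans hz.2⟩
      · exact hz)
    rw [kmono_sum] at this
    simp only [Matrix.cons_val_zero, Matrix.cons_val_one, Matrix.cons_val] at this
    have h1 : 0 < y - x := by linarith
    have h2 : 0 < z - y := by linarith
    have h3 : 0 < z - x := by linarith
    have e : f x / ((x - y) * (x - z)) + f y / ((y - x) * (y - z)) + f z / ((z - x) * (z - y))
        = ((f z - f y) / (z - y) - (f y - f x) / (y - x)) / (z - x) := by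
      have := h1.ne'
      have := h2.ne'
      have := h3.ne'
      rw [show x - y = -(y - x) by ring, show x - z = -(z - x) by ring, show y - z = -(z - y) by ring]
      field_simp
      ring
    rw [e] at this
    have h4 := mul_nonneg this h3.le
    rw [div_mul_cancel₀ _ h3.ne'] at h4
    linarith
  · intro hf x hinj hx
    rw [kmono_sum]
    have h01 : x 0 ≠ x 1 := fun h => by simpa using hinj h
    have h02 : x 0 ≠ x 2 := fun h => by simpa using hinj h
    have h12 : x 1 ≠ x 2 := fun h => by simpa using hinj h
    have m0 := hx 0
    have m1 := hx 1
    have m2 := hx 2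
    generalize x 0 = a at *
    generalize x 1 = b at *
    generalize x 2 = c at *
    rcases lt_or_gt_of_ne h01 with h | h <;> rcases lt_or_gt_of_ne h02 with h' | h' <;>
      rcases lt_or_gt_of_ne h12 with h'' | h''
    · have := dd_nonneg hf m0 m2 h h''
      linarith
    · have := dd_nonneg hf m0 m1 h' h''
      rw [mul_comm (c - a), mul_comm (a - c), mul_comm (b - a)] at *
      linarith
    · linarith
    · have := dd_nonneg hf m2 m1 h' h
      rw [mul_comm (c - a), mul_comm (a - b), mul_comm (b - a)] at *
      linarith
    · have := dd_nonneg hf m1 m2 h h'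
      rw [mul_comm (c - a), mul_comm (a - b)] at *
      linarith
    · linarith
    · have := dd_nonneg hf m1 m0 h'' h'
      rw [mul_comm (c - a), mul_comm (a - b), mul_comm (b - a)] at *
      linarith
    · have := dd_nonneg hf m2 m0 h'' h
      rw [mul_comm (c - a), mul_comm (a - c), mul_comm (b - a)] at *
      linarith

lemma local_int {f : ℝ → ℝ} (hf : ConvexOn ℝ (Ioo (-1) 1) f) {a b u m M : ℝ} (hab : a ≤ b)
    (hu : 0 < u) (hm : 0 < m) (h1 : -1 < a - u - m) (h2 : b + u + m < 1)
    (hM : ∀ y ∈ Icc (a - u - m) (b + u + m), |f y| ≤ M) :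
    ∫ x in a..b, (f (x - u) - 2 * f x + f (x + u)) ≤ 4 * M * u ^ 2 / m := by
  have hc : ContinuousOn f (Ioo (-1) 1) := hf.continuousOn isOpen_Ioo
  have hGc : ContinuousOn (fun x => f x - f (x - u)) (Icc a (b + u)) := by
    apply ContinuousOn.sub
    · exact hc.mono (fun x hx => ⟨by linarith [hx.1], by linarith [hx.2]⟩)
    · apply hc.comp (by fun_prop)
      intro x hx
      exact ⟨by linarith [hx.1], by linarith [hx.2]⟩
  have hI : ∀ c d, a ≤ c → c ≤ b + u → a ≤ d → d ≤ b + u →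
      IntervalIntegrable (fun x => f x - f (x - u)) volume c d := by
    intro c d k1 k2 k3 k4
    apply ContinuousOn.intervalIntegrable
    apply hGc.mono
    exact uIcc_subset_Icc ⟨k1, k2⟩ ⟨k3, k4⟩
  have hB : ∀ x ∈ Icc a (b + u), ‖f x - f (x - u)‖ ≤ 2 * M / m * u := by
    intro x hx
    have i1 : x - u - m ∈ Ioo (-1 : ℝ) 1 := ⟨by linarith [hx.1], by linarith [hx.2]⟩
    have i2 : x - u ∈ Ioo (-1 : ℝ) 1 := ⟨by linarith [hx.1], by linarith [hx.2]⟩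
    have i3 : x ∈ Ioo (-1 : ℝ) 1 := ⟨by linarith [hx.1], by linarith [hx.2]⟩
    have i4 : x + m ∈ Ioo (-1 : ℝ) 1 := ⟨by linarith [hx.1], by linarith [hx.2]⟩
    have s1 := hf.slope_mono_adjacent i2 i4 (y := x) (by linarith) (by linarith)
    have s2 := hf.slope_mono_adjacent i1 i3 (y := x - u) (by linarith) (by linarith)
    have b1 := abs_le.1 (hM (x - u - m) ⟨by linarith [hx.1], by linarith [hx.2]⟩)
    have b2 := abs_le.1 (hM (x - u) ⟨by linarith [hx.1], by linarith [hx.2]⟩)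
    have b3 := abs_le.1 (hM x ⟨by linarith [hx.1], by linarith [hx.2]⟩)
    have b4 := abs_le.1 (hM (x + m) ⟨by linarith [hx.1], by linarith [hx.2]⟩)
    rw [show x - (x - u) = u by ring, show x + m - x = m by ring] at s1
    rw [show x - (x - u) = u by ring, show x - u - (x - u - m) = m by ring] at s2
    have t1 : (f (x + m) - f x) / m ≤ 2 * M / m := by gcongr; linarith
    have t2 : -(2 * M / m) ≤ (f (x - u) - f (x - u - m)) / m := by
      rw [← neg_div]; gcongr; linarith
    rw [Real.norm_eq_abs, abs_le]
    constructor
    · have := (le_div_iff₀ hu).1 (t2.trans s2)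
      linarith
    · exact (div_le_iff₀ hu).1 (s1.trans t1)
  have e : ∫ x in a..b, (f (x - u) - 2 * f x + f (x + u)) =
      (∫ x in b..(b+u), (f x - f (x - u))) - ∫ x in a..(a+u), (f x - f (x - u)) := by
    have k := intervalIntegral.integral_interval_sub_interval_comm
      (hI (a + u) (b + u) (by linarith) (by linarith) (by linarith) (by linarith))
      (hI a b (by linarith) (by linarith) (by linarith) (by linarith))
      (hI (a + u) a (by linarith) (by linarith) (by linarith) (by linarith))
    have k2 : ∫ x in a..b, (f (x - u) - 2 * f x + f (x + u)) =
      (∫ x in (a+u)..(b+u), (f x - f (x - u))) - ∫ x in a..b, (f x - f (x - u)) := by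
      rw [← intervalIntegral.integral_comp_add_right (fun x => f x - f (x - u)) u,
        ← intervalIntegral.integral_sub]
      · congr 1
        ext x
        rw [show x + u - u = x by ring]
        ring
      · have := (hI (a + u) (b + u) (by linarith) (by linarith) (by linarith) (by linarith)).comp_add_right u
        simpa using this
      · exact (hI a b (by linarith) (by linarith) (by linarith) (by linarith))
    rw [k2, k, intervalIntegral.integral_symm (a+u) a, intervalIntegral.integral_symm (b+u) b]
    ring
  rw [e]
  have n1 : ‖∫ x in b..(b+u), (f x - f (x - u))‖ ≤ 2 * M / m * u * |b + u - b| := by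
    apply intervalIntegral.norm_integral_le_of_norm_le_const
    intro x hx
    rw [uIoc_of_le (by linarith)] at hx
    exact hB x ⟨by linarith [hx.1], hx.2⟩
  have n2 : ‖∫ x in a..(a+u), (f x - f (x - u))‖ ≤ 2 * M / m * u * |a + u - a| := by
    apply intervalIntegral.norm_integral_le_of_norm_le_const
    intro x hx
    rw [uIoc_of_le (by linarith)] at hx
    exact hB x ⟨by linarith [hx.1], by linarith [hx.2]⟩
  rw [show b + u - b = u by ring, abs_of_pos hu, Real.norm_eq_abs] at n1
  rw [show a + u - a = u by ring, abs_of_pos hu, Real.norm_eq_abs] at n2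
  have e3 : 4 * M * u ^ 2 / m = 2 * M / m * u * u + 2 * M / m * u * u := by field_simp; ring
  rw [e3]
  linarith [(abs_le.1 n1).2, (abs_le.1 n2).1]

lemma conv_mono {f : ℝ → ℝ} (hf : ConvexOn ℝ (Ioo (-1) 1) f) {x u v : ℝ} (hv : 0 ≤ v) (hvu : v ≤ u)
    (hu : 0 < u) (h1 : -1 < x - u) (h2 : x + u < 1) :
    0 ≤ f (x - v) - 2 * f x + f (x + v) ∧
    f (x - v) - 2 * f x + f (x + v) ≤ f (x - u) - 2 * f x + f (x + u) := by
  have i1 : x - u ∈ Ioo (-1 : ℝ) 1 := ⟨by linarith, by linarith⟩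
  have i2 : x + u ∈ Ioo (-1 : ℝ) 1 := ⟨by linarith, by linarith⟩
  have j1 : x - v ∈ Ioo (-1 : ℝ) 1 := ⟨by linarith, by linarith⟩
  have j2 : x + v ∈ Ioo (-1 : ℝ) 1 := ⟨by linarith, by linarith⟩
  constructor
  · have p0 : (0 : ℝ) ≤ 1 / 2 := by norm_num
    have := hf.2 j1 j2 p0 p0 (by norm_num)
    simp only [smul_eq_mul] at this
    rw [show 1 / 2 * (x - v) + 1 / 2 * (x + v) = x by ring] at this
    linarith
  · have p1 : 0 ≤ (u + v) / (2 * u) := by positivity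
    have p2 : 0 ≤ (u - v) / (2 * u) := div_nonneg (by linarith) (by linarith)
    have p3 : (u + v) / (2 * u) + (u - v) / (2 * u) = 1 := by field_simp; ring
    have q1 := hf.2 i1 i2 p1 p2 p3
    have q2 := hf.2 i1 i2 p2 p1 (by linarith)
    simp only [smul_eq_mul] at q1 q2
    rw [show (u + v) / (2 * u) * (x - u) + (u - v) / (2 * u) * (x + u) = x - v by field_simp; ring] at q1
    rw [show (u - v) / (2 * u) * (x - u) + (u + v) / (2 * u) * (x + u) = x + v by field_simp; ring] at q2
    have : (u - v) / (2 * u) = 1 - (u + v) / (2 * u) := by linarith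
    rw [this] at q1 q2
    linarith

lemma local_bound {f w : ℝ → ℝ} (hf : ConvexOn ℝ (Ioo (-1) 1) f) {a b u m M W h : ℝ} (hab : a ≤ b)
    (hu : 0 < u) (hm : 0 < m) (h1 : -1 < a - u - m) (h2 : b + u + m < 1)
    (hM : ∀ y ∈ Icc (a - u - m) (b + u + m), |f y| ≤ M) (hW0 : 0 ≤ W)
    (hW : ∀ x ∈ Icc a b, 0 ≤ w x ∧ w x ≤ W)
    (hφ : ∀ x ∈ Icc a b, 0 ≤ h * phiW x ∧ h * phiW x ≤ u) :
    ∫⁻ x in Icc a b, ‖w x * symmDelta 2 (h * phiW x) f x‖ₑ ≤ ENNReal.ofReal (W * (4 * M * u ^ 2 / m)) := by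
  have hc : ContinuousOn f (Ioo (-1) 1) := hf.continuousOn isOpen_Ioo
  have hgc : ContinuousOn (fun x => W * (f (x - u) - 2 * f x + f (x + u))) (Icc a b) := by
    apply continuousOn_const.mul
    apply ContinuousOn.add
    · apply ContinuousOn.sub
      · apply hc.comp (by fun_prop)
        intro x hx
        exact ⟨by linarith [hx.1], by linarith [hx.2]⟩
      · apply continuousOn_const.mul
        exact hc.mono (fun x hx => ⟨by linarith [hx.1], by linarith [hx.2]⟩)
    · apply hc.comp (by fun_prop)
      intro x hx
      exact ⟨by linarith [hx.1], by linarith [hx.2]⟩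
  have hpt : ∀ x ∈ Icc a b, 0 ≤ w x * symmDelta 2 (h * phiW x) f x ∧
      w x * symmDelta 2 (h * phiW x) f x ≤ W * (f (x - u) - 2 * f x + f (x + u)) := by
    intro x hx
    obtain ⟨v0, vu⟩ := hφ x hx
    have := conv_mono hf v0 vu hu (x := x) (by linarith [hx.1]) (by linarith [hx.2])
    rw [symm2, if_pos]
    · exact ⟨mul_nonneg (hW x hx).1 this.1, mul_le_mul (hW x hx).2 this.2 this.1 hW0⟩
    · exact ⟨⟨by linarith [hx.1], by linarith [hx.2]⟩, ⟨by linarith [hx.1], by linarith [hx.2]⟩⟩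
  calc ∫⁻ x in Icc a b, ‖w x * symmDelta 2 (h * phiW x) f x‖ₑ
      ≤ ∫⁻ x in Icc a b, ENNReal.ofReal (W * (f (x - u) - 2 * f x + f (x + u))) := by
        apply setLIntegral_mono' measurableSet_Icc
        intro x hx
        rw [Real.enorm_eq_ofReal (hpt x hx).1]
        exact ENNReal.ofReal_le_ofReal (hpt x hx).2
    _ = ENNReal.ofReal (∫ x in Icc a b, W * (f (x - u) - 2 * f x + f (x + u))) := by
        rw [ofReal_integral_eq_lintegral_ofReal]
        · exact hgc.integrableOn_Icc
        · filter_upwards [ae_restrict_mem measurableSet_Icc] with x hx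
          exact (hpt x hx).1.trans (hpt x hx).2
    _ ≤ _ := by
        apply ENNReal.ofReal_le_ofReal
        rw [integral_Icc_eq_integral_Ioc, ← intervalIntegral.integral_of_le hab,
          intervalIntegral.integral_const_mul]
        exact mul_le_mul_of_nonneg_left (local_int hf hab hu hm h1 h2 hM) hW0

def GoodF (α β : ℝ) (f : ℝ → ℝ) : Prop :=
  ConvexOn ℝ (Ioo (-1) 1) f ∧ ∀ y ∈ Ioo (-1 : ℝ) 1, jacobi α β y * |f y| ≤ 1

lemma jacobi_pos (α β : ℝ) {x : ℝ} (hx : x ∈ Ioo (-1 : ℝ) 1) : 0 < jacobi α β x :=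
  mul_pos (Real.rpow_pos_of_pos (by linarith [hx.1]) _) (Real.rpow_pos_of_pos (by linarith [hx.2]) _)

lemma jacobi_nonneg (α β : ℝ) {x : ℝ} (hx : x ∈ Icc (-1 : ℝ) 1) : 0 ≤ jacobi α β x :=
  mul_nonneg (Real.rpow_nonneg (by linarith [hx.1]) _) (Real.rpow_nonneg (by linarith [hx.2]) _)

lemma jacobi_neg (α β x : ℝ) : jacobi α β (-x) = jacobi β α x := by
  unfold jacobi
  rw [mul_comm, sub_neg_eq_add, ← sub_eq_add_neg]

lemma phiW_neg (x : ℝ) : phiW (-x) = phiW x := by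
  unfold phiW
  rw [neg_sq]

lemma symm2_neg (h : ℝ) (f : ℝ → ℝ) (x : ℝ) :
    symmDelta 2 h f (-x) = symmDelta 2 h (fun y => f (-y)) x := by
  rw [symm2, symm2]
  have e1 : -x - h = -(x + h) := by ring
  have e2 : -x + h = -(x - h) := by ring
  have e3 : (-(x + h) ∈ Icc (-1 : ℝ) 1 ∧ -(x - h) ∈ Icc (-1 : ℝ) 1) ↔
      (x - h ∈ Icc (-1 : ℝ) 1 ∧ x + h ∈ Icc (-1 : ℝ) 1) := by
    simp only [mem_Icc]
    constructor
    · rintro ⟨⟨a, b⟩, c, d⟩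
      exact ⟨⟨by linarith, by linarith⟩, by linarith, by linarith⟩
    · rintro ⟨⟨a, b⟩, c, d⟩
      exact ⟨⟨by linarith, by linarith⟩, by linarith, by linarith⟩
  rw [e1, e2]
  by_cases hh : (x - h ∈ Icc (-1 : ℝ) 1 ∧ x + h ∈ Icc (-1 : ℝ) 1)
  · rw [if_pos hh, if_pos (e3.2 hh)]
    ring
  · rw [if_neg hh, if_neg (fun k => hh (e3.1 k))]

lemma LpOn_one (g : ℝ → ℝ) (a b : ℝ) : LpOn g 1 a b = ∫⁻ x in Icc a b, ‖g x‖ₑ :=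
  eLpNorm_one_eq_lintegral_enorm

lemma LpOn_refl (g : ℝ → ℝ) (p : ℝ≥0∞) (a b : ℝ) :
    LpOn g p a b = LpOn (fun x => g (-x)) p (-b) (-a) := by
  unfold LpOn
  have h1 := (Measure.measurePreserving_neg (volume : Measure ℝ)).restrict_preimage
    (measurableSet_Icc (a := a) (b := b))
  have h2 : (Neg.neg ⁻¹' (Icc a b) : Set ℝ) = Icc (-b) (-a) := by
    ext x
    simp only [mem_preimage, mem_Icc]
    constructor
    · rintro ⟨h, k⟩; exact ⟨by linarith, by linarith⟩
    · rintro ⟨h, k⟩; exact ⟨by linarith, by linarith⟩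
  rw [h2] at h1
  rw [← h1.map_eq]
  exact (MeasurableEquiv.neg ℝ).measurableEmbedding.eLpNorm_map_measure

lemma convex_refl {f : ℝ → ℝ} (hf : ConvexOn ℝ (Ioo (-1) 1) f) :
    ConvexOn ℝ (Ioo (-1) 1) (fun x => f (-x)) := by
  refine ⟨convex_Ioo _ _, ?_⟩
  intro x hx y hy a b ha hb hab
  have := hf.2 (x := -x) (y := -y) ⟨by linarith [hx.2], by linarith [hx.1]⟩
    ⟨by linarith [hy.2], by linarith [hy.1]⟩ ha hb hab
  simp only [smul_eq_mul] at this ⊢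
  rwa [show a * -x + b * -y = -(a * x + b * y) by ring] at this

lemma GoodF.refl {α β : ℝ} {f : ℝ → ℝ} (hf : GoodF α β f) : GoodF β α (fun x => f (-x)) := by
  refine ⟨convex_refl hf.1, ?_⟩
  intro y hy
  rw [← jacobi_neg]
  exact hf.2 (-y) ⟨by linarith [hy.2], by linarith [hy.1]⟩

def KK (α β : ℝ) : ℝ := 8 ^ α * 8 ^ β

lemma KK_pos (α β : ℝ) : 0 < KK α β := by unfold KK; positivity

lemma jac_cmp {α β : ℝ} (hα : 0 ≤ α) (hβ : 0 ≤ β) {x y : ℝ} (hx : -1 ≤ x) (hx1 : x ≤ 1)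
    (hxy : 1 + x ≤ 8 * (1 + y)) (hy : y ≤ 3 / 4) : jacobi α β x ≤ KK α β * jacobi α β y := by
  unfold KK jacobi
  have h1 : (1 + x) ^ α ≤ 8 ^ α * (1 + y) ^ α := by
    rw [← Real.mul_rpow (by norm_num) (by linarith)]
    exact Real.rpow_le_rpow (by linarith) hxy hα
  have h2 : (1 - x) ^ β ≤ 8 ^ β * (1 - y) ^ β := by
    rw [← Real.mul_rpow (by norm_num) (by linarith)]
    exact Real.rpow_le_rpow (by linarith) (by linarith) hβ
  calc (1 + x) ^ α * (1 - x) ^ β ≤ (8 ^ α * (1 + y) ^ α) * (8 ^ β * (1 - y) ^ β) :=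
        mul_le_mul h1 h2 (Real.rpow_nonneg (by linarith) _) ((Real.rpow_nonneg (by linarith) _).trans h1)
    _ = _ := by ring

lemma piece_bound {α β : ℝ} (hα : 0 ≤ α) (hβ : 0 ≤ β) {f : ℝ → ℝ} (hf : GoodF α β f) {h d : ℝ}
    (h0 : 0 < h) (hd : 8 * h ^ 2 ≤ d) (hd1 : d ≤ 1) :
    ∫⁻ x in Icc (-1 + 3 / 4 * d) (-1 + d), ‖jacobi α β x * symmDelta 2 (h * phiW x) f x‖ₑ ≤
      ENNReal.ofReal (64 * KK α β * h ^ 2) := by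
  have hd0 : 0 < d := lt_of_lt_of_le (by positivity) hd
  set u := h * Real.sqrt (2 * d) with hu
  have hu0 : 0 < u := by positivity
  have hu2 : u ^ 2 = 2 * d * h ^ 2 := by
    rw [hu, mul_pow, Real.sq_sqrt (by positivity)]; ring
  have hud : u ≤ d / 2 := by
    refine (abs_le_of_sq_le_sq' ?_ (by positivity)).2
    rw [hu2]; nlinarith
  set J0 := (d / 8) ^ α * (1 / 4 : ℝ) ^ β with hJ0
  have hJ : 0 < J0 := by positivity
  have key := local_bound (w := jacobi α β) (h := h) hf.1 (a := -1 + 3 / 4 * d) (b := -1 + d) (u := u)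
    (m := d / 8) (M := J0⁻¹) (W := KK α β * J0) (by linarith) hu0 (by linarith) (by linarith)
    (by linarith) ?_ (mul_pos (KK_pos _ _) hJ).le ?_ ?_
  · refine key.trans (ENNReal.ofReal_le_ofReal (le_of_eq ?_))
    rw [hu2]
    field_simp
    ring
  · intro y hy
    have y1 : -1 + d / 8 ≤ y := by linarith [hy.1]
    have y2 : y ≤ 5 / 8 := by linarith [hy.2]
    have hj : J0 ≤ jacobi α β y := by
      apply mul_le_mul
      · exact Real.rpow_le_rpow (by linarith) (by linarith) hα
      · exact Real.rpow_le_rpow (by norm_num) (by linarith) hβ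
      · positivity
      · exact Real.rpow_nonneg (by linarith) _
    have := hf.2 y ⟨by linarith, by linarith⟩
    rw [inv_eq_one_div, le_div_iff₀ hJ, mul_comm]
    exact (mul_le_mul_of_nonneg_right hj (abs_nonneg _)).trans this
  · intro x hx
    refine ⟨jacobi_nonneg _ _ ⟨by linarith [hx.1], by linarith [hx.2]⟩, ?_⟩
    unfold KK jacobi
    have h1 : (1 + x) ^ α ≤ 8 ^ α * (d / 8) ^ α := by
      rw [← Real.mul_rpow (by norm_num) (by linarith)]
      exact Real.rpow_le_rpow (by linarith [hx.1]) (by linarith [hx.2]) hα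
    have h2 : (1 - x) ^ β ≤ 8 ^ β * (1 / 4) ^ β := by
      rw [← Real.mul_rpow (by norm_num) (by norm_num)]
      exact Real.rpow_le_rpow (by linarith [hx.2]) (by linarith [hx.1]) hβ
    calc (1 + x) ^ α * (1 - x) ^ β ≤ (8 ^ α * (d / 8) ^ α) * (8 ^ β * (1 / 4) ^ β) :=
          mul_le_mul h1 h2 (Real.rpow_nonneg (by linarith [hx.2]) _) (by positivity)
      _ = _ := by rw [hJ0]; ring
  · intro x hx
    refine ⟨mul_nonneg h0.le (Real.sqrt_nonneg _), ?_⟩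
    apply mul_le_mul_of_nonneg_left _ h0.le
    apply Real.sqrt_le_sqrt
    nlinarith [hx.2, sq_nonneg (1 + x)]

lemma half_bound {α β : ℝ} (hα : 0 ≤ α) (hβ : 0 ≤ β) {f : ℝ → ℝ} (hf : GoodF α β f) {h : ℝ}
    (h0 : 0 < h) (h1 : h < 1 / 4) :
    ∫⁻ x in Icc (-1 + 8 * h ^ 2) 0, ‖jacobi α β x * symmDelta 2 (h * phiW x) f x‖ₑ ≤
      ENNReal.ofReal (64 * KK α β * h ^ 2 * (1 + 8 * (-Real.log h))) := by
  classical
  have hK := KK_pos α β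
  have hL : 0 < -Real.log h := by
    have := Real.log_neg h0 (by linarith); linarith
  set N := ⌊8 * (-Real.log h)⌋₊ with hN
  let S : Fin (N + 1) → Set ℝ := fun j => if 8 * h ^ 2 ≤ (3 / 4 : ℝ) ^ (j : ℕ) then
    Icc (-1 + 3 / 4 * (3 / 4 : ℝ) ^ (j : ℕ)) (-1 + (3 / 4 : ℝ) ^ (j : ℕ)) else ∅
  have hcov : Icc (-1 + 8 * h ^ 2) 0 ⊆ ⋃ j, S j := by
    intro x hx
    have hxp : 0 < 1 + x := lt_of_lt_of_le (by positivity : 0 < 8 * h ^ 2) (by linarith [hx.1])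
    obtain ⟨n, n1, n2⟩ := exists_nat_pow_near_of_lt_one (x := 1 + x) (y := 3 / 4) hxp
      (by linarith [hx.2]) (by norm_num) (by norm_num)
    have k : 8 * h ^ 2 ≤ (3 / 4 : ℝ) ^ n := by linarith [hx.1]
    have kn : (n : ℝ) ≤ 8 * (-Real.log h) := by
      have l1 := Real.log_le_log (by positivity) k
      rw [Real.log_pow, Real.log_mul (by norm_num) (by positivity), Real.log_pow] at l1
      have l2 : Real.log (3 / 4 : ℝ) ≤ -(1 / 4) := by
        have := Real.log_le_sub_one_of_pos (show (0 : ℝ) < 3 / 4 by norm_num)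
        linarith
      have l3 : 0 < Real.log 8 := Real.log_pos (by norm_num)
      have l4 : (n : ℝ) * Real.log (3 / 4) ≤ n * (-(1 / 4)) :=
        mul_le_mul_of_nonneg_left l2 (Nat.cast_nonneg _)
      push_cast at l1
      linarith
    have hn : n < N + 1 := Nat.lt_succ_of_le (Nat.le_floor kn)
    refine mem_iUnion.2 ⟨⟨n, hn⟩, ?_⟩
    simp only [S]
    rw [if_pos k]
    rw [pow_succ] at n1
    exact ⟨by linarith, by linarith⟩
  calc _ ≤ ∫⁻ x in ⋃ j, S j, ‖jacobi α β x * symmDelta 2 (h * phiW x) f x‖ₑ :=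
        lintegral_mono_set hcov
    _ ≤ ∑' j, ∫⁻ x in S j, ‖jacobi α β x * symmDelta 2 (h * phiW x) f x‖ₑ := lintegral_iUnion_le _ _
    _ ≤ ∑' j : Fin (N + 1), ENNReal.ofReal (64 * KK α β * h ^ 2) := by
        apply ENNReal.tsum_le_tsum
        intro j
        simp only [S]
        split_ifs with hj
        · exact piece_bound hα hβ hf h0 hj (pow_le_one₀ (by norm_num) (by norm_num))
        · simp
    _ = ENNReal.ofReal ((N + 1) * (64 * KK α β * h ^ 2)) := by
        rw [tsum_fintype, Finset.sum_const, Finset.card_univ, Fintype.card_fin, nsmul_eq_mul,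
          ENNReal.ofReal_mul (p := (N : ℝ) + 1) (by positivity)]
        congr 1
        rw [ENNReal.ofReal_add (by positivity) (by norm_num)]
        simp
    _ ≤ _ := by
        apply ENNReal.ofReal_le_ofReal
        have := Nat.floor_le (show 0 ≤ 8 * (-Real.log h) by positivity)
        rw [mul_comm]
        apply mul_le_mul_of_nonneg_left _ (by positivity)
        linarith

lemma main_h {α β : ℝ} (hα : 0 ≤ α) (hβ : 0 ≤ β) {f : ℝ → ℝ} (hf : GoodF α β f) {h : ℝ}
    (h0 : 0 < h) (h1 : h < 1 / 4) :
    ∫⁻ x in Icc (-1 + 8 * h ^ 2) (1 - 8 * h ^ 2), ‖jacobi α β x * symmDelta 2 (h * phiW x) f x‖ₑ ≤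
      ENNReal.ofReal (128 * KK α β * h ^ 2 * (1 + 8 * (-Real.log h))) := by
  have hK := KK_pos α β
  have hL : 0 < -Real.log h := by
    have := Real.log_neg h0 (by linarith); linarith
  have hs : Icc (-1 + 8 * h ^ 2) (1 - 8 * h ^ 2) ⊆ Icc (-1 + 8 * h ^ 2) 0 ∪ Icc 0 (1 - 8 * h ^ 2) := by
    intro x hx
    rcases le_total x 0 with k | k
    · exact Or.inl ⟨hx.1, k⟩
    · exact Or.inr ⟨k, hx.2⟩
  refine (lintegral_mono_set hs).trans ((lintegral_union_le _ _ _).trans ?_)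
  have r := half_bound hβ hα hf.refl h0 h1
  have r2 : ∫⁻ x in Icc 0 (1 - 8 * h ^ 2), ‖jacobi α β x * symmDelta 2 (h * phiW x) f x‖ₑ =
      ∫⁻ x in Icc (-1 + 8 * h ^ 2) 0, ‖jacobi β α x * symmDelta 2 (h * phiW x) (fun x => f (-x)) x‖ₑ := by
    rw [← LpOn_one, ← LpOn_one, LpOn_refl]
    rw [show -(1 - 8 * h ^ 2) = -1 + 8 * h ^ 2 by ring, neg_zero]
    congr 1
    ext x
    rw [jacobi_neg, phiW_neg, symm2_neg]
  rw [r2]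
  refine (add_le_add (half_bound hα hβ hf h0 h1) r).trans ?_
  rw [← ENNReal.ofReal_add (by positivity) (by have := KK_pos β α; positivity)]
  apply ENNReal.ofReal_le_ofReal
  have : KK β α = KK α β := by unfold KK; ring
  rw [this]
  apply le_of_eq
  ring

lemma main_bound {α β : ℝ} (hα : 0 ≤ α) (hβ : 0 ≤ β) {f : ℝ → ℝ} (hf : GoodF α β f) {δ : ℝ}
    (hδ : 0 < δ) (hδ1 : δ < 1 / 4) :
    OmegaMain 2 f δ (jacobi α β) 1 ≤
      ENNReal.ofReal (128 * KK α β * (δ ^ 2 * (9 + 8 * (-Real.log δ)))) := by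
  unfold OmegaMain
  refine iSup₂_le ?_
  intro h hh
  obtain ⟨h0, h1⟩ := hh
  rw [LpOn_one]
  have := main_h hα hβ hf h0 (by linarith)
  have e1 : 2 * ((2 : ℕ) : ℝ) ^ 2 * h ^ 2 = 8 * h ^ 2 := by push_cast; ring
  rw [e1]
  refine this.trans (ENNReal.ofReal_le_ofReal ?_)
  rw [mul_assoc]
  apply mul_le_mul_of_nonneg_left _ (by have := KK_pos α β; positivity)
  have l1 : Real.log (δ / h) ≤ δ / h - 1 := Real.log_le_sub_one_of_pos (by positivity)
  rw [Real.log_div hδ.ne' h0.ne'] at l1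
  have l2 : 0 < -Real.log δ := by
    have := Real.log_neg hδ (by linarith); linarith
  have l3 : h ^ 2 * (-Real.log h) ≤ h ^ 2 * (-Real.log δ + δ / h) :=
    mul_le_mul_of_nonneg_left (by linarith) (by positivity)
  have l4 : h ^ 2 * (δ / h) = h * δ := by field_simp
  have l5 : h ^ 2 ≤ δ ^ 2 := by gcongr
  have l6 : h * δ ≤ δ ^ 2 := by nlinarith
  have l7 : h ^ 2 * (-Real.log δ) ≤ δ ^ 2 * (-Real.log δ) := mul_le_mul_of_nonneg_right l5 l2.le
  nlinarith

lemma fwd_bound {α β : ℝ} (hα : 0 ≤ α) (hβ : 0 ≤ β) {f : ℝ → ℝ} (hf : GoodF α β f) {δ : ℝ}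
    (hδ : 0 < δ) (hδ1 : δ < 1 / 4) :
    OmegaFwd 2 f δ (jacobi α β) 1 ≤ ENNReal.ofReal (32 * KK α β * δ ^ 2) := by
  have hK := KK_pos α β
  unfold OmegaFwd
  refine iSup₂_le ?_
  intro h hh
  obtain ⟨h0, h1⟩ := hh
  rw [LpOn_one]
  have e1 : 2 * ((2 : ℕ) : ℝ) ^ 2 * δ ^ 2 = 8 * δ ^ 2 := by push_cast; ring
  have e2 : ((2 : ℕ) : ℝ) * h / 2 = h := by push_cast; ring
  rw [e1] at h1 ⊢
  rw [e2]
  have hd : 8 * δ ^ 2 < 1 / 2 := by nlinarith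
  rw [← setLIntegral_congr (Ioc_ae_eq_Icc (μ := volume))]
  calc _ ≤ ∫⁻ x in Ioc (-1) (-1 + 8 * δ ^ 2), ENNReal.ofReal (4 * KK α β) := by
        apply setLIntegral_mono' measurableSet_Ioc
        intro x hx
        rw [Real.enorm_eq_ofReal_abs]
        apply ENNReal.ofReal_le_ofReal
        rw [symm2, show x + h - h = x by ring]
        have q : ∀ y, x ≤ y → y ≤ 3 / 4 → |jacobi α β x * f y| ≤ KK α β := by
          intro y hy hy1
          have hx1 := hx.1
          rw [abs_mul, abs_of_pos (jacobi_pos α β ⟨hx.1, by linarith⟩)]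
          have c := jac_cmp hα hβ (x := x) (y := y) (by linarith) (by linarith) (by linarith) hy1
          calc jacobi α β x * |f y| ≤ KK α β * jacobi α β y * |f y| :=
                mul_le_mul_of_nonneg_right c (abs_nonneg _)
            _ = KK α β * (jacobi α β y * |f y|) := by ring
            _ ≤ KK α β * 1 := mul_le_mul_of_nonneg_left (hf.2 y ⟨by linarith, by linarith⟩) hK.le
            _ = _ := mul_one _
        split_ifs
        · have q1 := abs_le.1 (q x le_rfl (by linarith [hx.2]))
          have q2 := abs_le.1 (q (x + h) (by linarith) (by linarith [hx.2]))
          have q3 := abs_le.1 (q (x + h + h) (by linarith) (by linarith [hx.2]))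
          rw [abs_le]
          constructor <;> nlinarith
        · simp; exact hK.le
    _ = _ := by
        rw [setLIntegral_const, Real.volume_Ioc, ← ENNReal.ofReal_mul (by positivity)]
        congr 1
        ring

lemma bwd_eq (α β : ℝ) (f : ℝ → ℝ) (δ : ℝ) :
    OmegaBwd 2 f δ (jacobi α β) 1 = OmegaFwd 2 (fun x => f (-x)) δ (jacobi β α) 1 := by
  unfold OmegaBwd OmegaFwd
  congr 1
  ext h
  congr 1
  ext hh
  rw [LpOn_refl, neg_sub, sub_eq_add_neg, add_comm]
  congr 2
  ext x
  rw [jacobi_neg, ← symm2_neg, neg_add, ← sub_eq_add_neg]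

lemma mainOmega_eq (α β : ℝ) (f : ℝ → ℝ) (δ : ℝ) :
    OmegaMain 2 f δ (jacobi α β) 1 = OmegaMain 2 (fun x => f (-x)) δ (jacobi β α) 1 := by
  unfold OmegaMain
  congr 1
  ext h
  congr 1
  ext hh
  rw [LpOn_refl]
  congr 1
  · ext x
    rw [jacobi_neg, phiW_neg, ← symm2_neg]
  · ring
  · ring

lemma good_of {α β : ℝ} {f : ℝ → ℝ} (hf : f ∈ BSet ∞ α β ∩ MSet 2) : GoodF α β f := by
  obtain ⟨⟨hm, hn⟩, hk⟩ := hf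
  have hc := (kmono_iff f).1 hk
  refine ⟨hc, ?_⟩
  have hcont : ContinuousOn f (Ioo (-1) 1) := hc.continuousOn isOpen_Ioo
  have hae : ∀ᵐ x ∂(volume.restrict (Icc (-1 : ℝ) 1)), ‖jacobi α β x * f x‖ₑ ≤ 1 := by
    unfold LpOn at hn
    rw [eLpNorm_exponent_top] at hn
    rw [← hn]
    exact ae_le_eLpNormEssSup
  have hae2 : (fun x => max (jacobi α β x * |f x|) 1) =ᵐ[volume.restrict (Ioo (-1 : ℝ) 1)] fun _ => 1 := by
    have := ae_mono (Measure.restrict_mono_set volume (Ioo_subset_Icc_self (a := (-1 : ℝ)) (b := 1))) hae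
    filter_upwards [this, ae_restrict_mem measurableSet_Ioo] with x hx hx2
    apply max_eq_right
    rw [Real.enorm_eq_ofReal_abs, abs_mul, abs_of_pos (jacobi_pos α β hx2)] at hx
    exact ENNReal.ofReal_le_one.1 hx
  have hj : ContinuousOn (jacobi α β) (Ioo (-1) 1) := by
    unfold jacobi
    apply ContinuousOn.mul
    · apply ContinuousOn.rpow_const (by fun_prop)
      intro x hx
      left
      linarith [hx.1]
    · apply ContinuousOn.rpow_const (by fun_prop)
      intro x hx
      left
      linarith [hx.2]
  have := Measure.eqOn_of_ae_eq hae2 (ContinuousOn.sup (hj.mul hcont.abs) continuousOn_const) continuousOn_const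
    (by rw [isOpen_Ioo.interior_eq]; exact subset_closure)
  intro y hy
  exact max_eq_right_iff.1 (this hy)

lemma upper {α β : ℝ} (hα : 0 ≤ α) (hβ : 0 ≤ β) {f : ℝ → ℝ} (hf : f ∈ BSet ∞ α β ∩ MSet 2) {δ : ℝ}
    (hδ : 0 < δ) (hδ1 : δ < 1 / 4) :
    omegaDT 2 f δ (jacobi α β) 1 ≤ ENNReal.ofReal (2240 * KK α β * δ ^ 2 * |Real.log δ|) := by
  have hg := good_of hf
  have hK := KK_pos α β
  have hL : 1 ≤ -Real.log δ := by
    rw [← Real.log_inv, Real.le_log_iff_exp_le (by positivity)]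
    have : (4 : ℝ) ≤ δ⁻¹ := by rw [le_inv_comm₀ (by norm_num) hδ]; linarith
    linarith [Real.exp_one_lt_d9]
  unfold omegaDT
  rw [bwd_eq]
  have hs : KK β α = KK α β := by unfold KK; ring
  refine (add_le_add (add_le_add (main_bound hα hβ hg hδ hδ1) (fwd_bound hα hβ hg hδ hδ1))
    (fwd_bound hβ hα hg.refl hδ hδ1)).trans ?_
  rw [hs, ← ENNReal.ofReal_add (by positivity) (by positivity),
    ← ENNReal.ofReal_add (by positivity) (by positivity)]
  apply ENNReal.ofReal_le_ofReal
  rw [abs_of_neg (by linarith)]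
  have : 0 ≤ KK α β * δ ^ 2 * (-Real.log δ - 1) := mul_nonneg (by positivity) (by linarith)
  nlinarith

lemma delta_low {α t u : ℝ} (hα : 0 < α) (ht : 0 < t) (hu : 0 ≤ u) (hut : u < t) :
    α * (u / t) ^ 2 * t ^ (-α) ≤ (t - u) ^ (-α) - 2 * t ^ (-α) + (t + u) ^ (-α) := by
  have p1 : 0 < t - u := by linarith
  have p2 : 0 < t + u := by linarith
  have hs1 : u / t < 1 := (div_lt_one ht).2 hut
  have hs0 : 0 ≤ u / t := by positivity
  set s := u / t with hs
  have hst : u = s * t := by rw [hs]; field_simp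
  have hs2 : 0 < 1 - s ^ 2 := by nlinarith
  have e1 : ∀ y : ℝ, 0 < y → y ^ (-α) = (y ^ (-α / 2)) ^ 2 := by
    intro y hy
    rw [← Real.rpow_natCast, ← Real.rpow_mul hy.le]
    congr 1
    push_cast; ring
  have e2 : (t - u) ^ (-α / 2) * (t + u) ^ (-α / 2) = t ^ (-α) * (1 - s ^ 2) ^ (-α / 2) := by
    rw [← Real.mul_rpow p1.le p2.le, show (t - u) * (t + u) = (t * t) * (1 - s ^ 2) by rw [hst]; ring,
      Real.mul_rpow (by positivity) hs2.le, Real.mul_rpow ht.le ht.le, e1 t ht]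
    ring
  have e3 : 1 + α / 2 * s ^ 2 ≤ (1 - s ^ 2) ^ (-α / 2) := by
    rw [Real.rpow_def_of_pos hs2]
    have l := Real.log_le_sub_one_of_pos hs2
    have := Real.add_one_le_exp (Real.log (1 - s ^ 2) * (-α / 2))
    nlinarith
  have h0 : 0 < t ^ (-α) := Real.rpow_pos_of_pos ht _
  have e4 := mul_le_mul_of_nonneg_left e3 h0.le
  rw [← e2] at e4
  rw [e1 _ p1, e1 _ p2]
  nlinarith [sq_nonneg ((t - u) ^ (-α / 2) - (t + u) ^ (-α / 2))]

lemma convex_g {α : ℝ} (hα : 0 < α) {c : ℝ} (hc : 0 ≤ c) :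
    ConvexOn ℝ (Ioo (-1) 1) (fun x : ℝ => c * (1 + x) ^ (-α)) := by
  have hg : ConvexOn ℝ (Ioo (-1) 1) (fun x : ℝ => (1 + x) ^ (-α)) := by
    refine ⟨convex_Ioo _ _, ?_⟩
    intro x hx y hy a b ha hb hab
    have hx1 : 0 < 1 + x := by linarith [hx.1]
    have hy1 : 0 < 1 + y := by linarith [hy.1]
    have e : 1 + (a * x + b * y) = a * (1 + x) + b * (1 + y) := by linear_combination -hab
    have hp : 0 < a * (1 + x) + b * (1 + y) := by
      rcases ha.eq_or_lt with h | h
      · have : b = 1 := by linarith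
        rw [← h, this]; linarith
      · have := mul_nonneg hb hy1.le
        have := mul_pos h hx1
        linarith
    have hl := (strictConcaveOn_log_Ioi.concaveOn).2 (x := 1 + x) (y := 1 + y) hx1 hy1 ha hb hab
    have hE := convexOn_exp.2 (x := Real.log (1 + x) * (-α)) (y := Real.log (1 + y) * (-α))
      (mem_univ _) (mem_univ _) ha hb hab
    simp only [smul_eq_mul] at hl hE ⊢
    rw [e, Real.rpow_def_of_pos hp, Real.rpow_def_of_pos hx1, Real.rpow_def_of_pos hy1]
    refine le_trans (Real.exp_le_exp.2 ?_) hE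
    nlinarith
  exact hg.smul hc

lemma lower_int {α β : ℝ} (hα : 0 < α) (hβ : 0 ≤ β) {c : ℝ} (hc : 0 < c) {δ : ℝ}
    (hδ : 0 < δ) (hδ1 : δ < 1 / 4) :
    ENNReal.ofReal (c * α / 2 * δ ^ 2 * |Real.log δ|) ≤
      OmegaMain 2 (fun x => c * (1 + x) ^ (-α)) δ (jacobi α β) 1 := by
  have hd : 8 * δ ^ 2 < 1 / 2 := by nlinarith
  have hd0 : 0 < 8 * δ ^ 2 := by positivity
  unfold OmegaMain
  refine le_trans ?_ (le_iSup₂ (f := fun h (_ : h ∈ Ioc (0 : ℝ) δ) => LpOn (fun x => jacobi α β x *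
    symmDelta 2 (h * phiW x) (fun x => c * (1 + x) ^ (-α)) x) 1
      (-1 + 2 * ((2 : ℕ) : ℝ) ^ 2 * h ^ 2) (1 - 2 * ((2 : ℕ) : ℝ) ^ 2 * h ^ 2)) δ ⟨hδ, le_rfl⟩)
  have e1 : 2 * ((2 : ℕ) : ℝ) ^ 2 * δ ^ 2 = 8 * δ ^ 2 := by push_cast; ring
  simp only [e1]
  rw [LpOn_one]
  have hsub : Icc (-1 + 8 * δ ^ 2) 0 ⊆ Icc (-1 + 8 * δ ^ 2) (1 - 8 * δ ^ 2) :=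
    Icc_subset_Icc le_rfl (by linarith)
  refine le_trans ?_ (lintegral_mono_set hsub)
  have hpt : ∀ x ∈ Icc (-1 + 8 * δ ^ 2) 0, c * α * δ ^ 2 * (1 + x)⁻¹ ≤
      jacobi α β x * symmDelta 2 (δ * phiW x) (fun x => c * (1 + x) ^ (-α)) x := by
    intro x hx
    have hx1 : 0 < 1 + x := by linarith [hx.1]
    have hx0 := hx.2
    have hx2 : 8 * δ ^ 2 ≤ 1 + x := by linarith [hx.1]
    have hq : 0 ≤ 1 - x ^ 2 := by nlinarith
    have hph0 : 0 ≤ phiW x := Real.sqrt_nonneg _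
    have hph : phiW x ^ 2 = 1 - x ^ 2 := Real.sq_sqrt hq
    have hu0 : 0 ≤ δ * phiW x := by positivity
    have hu2 : (δ * phiW x) ^ 2 = δ ^ 2 * (1 - x ^ 2) := by rw [mul_pow, hph]
    set u := δ * phiW x with hu
    have hut : u < 1 + x := by
      apply lt_of_pow_lt_pow_left₀ 2 hx1.le
      rw [hu2]
      nlinarith
    have dl := delta_low hα hx1 hu0 hut
    have huu : u ≤ 1 := by linarith
    rw [symm2, if_pos ⟨⟨by linarith, by linarith⟩, ⟨by linarith, by linarith⟩⟩]
    have e2 : (u / (1 + x)) ^ 2 = δ ^ 2 * (1 - x) * (1 + x)⁻¹ := by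
      rw [div_pow, hu2]
      field_simp
      ring
    rw [e2] at dl
    have hr : (1 + x) ^ α * (1 + x) ^ (-α) = 1 := by
      rw [← Real.rpow_add hx1]; simp
    have hb : 1 ≤ (1 - x) ^ β := Real.one_le_rpow (by linarith) hβ
    have ha0 : 0 < (1 + x) ^ α := Real.rpow_pos_of_pos hx1 _
    have hi : 0 < (1 + x)⁻¹ := inv_pos.2 hx1
    unfold jacobi
    calc c * α * δ ^ 2 * (1 + x)⁻¹ ≤ c * α * δ ^ 2 * (1 + x)⁻¹ * ((1 - x) * (1 - x) ^ β) := by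
          apply le_mul_of_one_le_right (by positivity)
          exact one_le_mul_of_one_le_of_one_le (by linarith) hb
      _ = (1 + x) ^ α * (1 - x) ^ β * (c * (α * (δ ^ 2 * (1 - x) * (1 + x)⁻¹) * (1 + x) ^ (-α))) := by
          linear_combination (-(c * α * δ ^ 2 * (1 + x)⁻¹ * ((1 - x) * (1 - x) ^ β))) * hr
      _ ≤ (1 + x) ^ α * (1 - x) ^ β * (c * ((1 + x - u) ^ (-α) - 2 * (1 + x) ^ (-α) + (1 + x + u) ^ (-α))) := by
          apply mul_le_mul_of_nonneg_left _ (by positivity)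
          exact mul_le_mul_of_nonneg_left dl hc.le
      _ = _ := by
          rw [show 1 + (x - u) = 1 + x - u by ring, show 1 + (x + u) = 1 + x + u by ring]
          ring
  have hcont : ContinuousOn (fun x : ℝ => c * α * δ ^ 2 * (1 + x)⁻¹) (Icc (-1 + 8 * δ ^ 2) 0) := by
    apply continuousOn_const.mul
    apply ContinuousOn.inv₀ (by fun_prop)
    intro x hx
    linarith [hx.1]
  have hnn : ∀ x ∈ Icc (-1 + 8 * δ ^ 2) 0, 0 ≤ c * α * δ ^ 2 * (1 + x)⁻¹ := by
    intro x hx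
    have : 0 < 1 + x := by linarith [hx.1]
    positivity
  calc _ ≤ ENNReal.ofReal (∫ x in Icc (-1 + 8 * δ ^ 2) 0, c * α * δ ^ 2 * (1 + x)⁻¹) := by
        apply ENNReal.ofReal_le_ofReal
        rw [integral_Icc_eq_integral_Ioc, ← intervalIntegral.integral_of_le (by linarith),
          intervalIntegral.integral_const_mul,
          intervalIntegral.integral_comp_add_left (fun x => x⁻¹) 1,
          show 1 + (-1 + 8 * δ ^ 2) = 8 * δ ^ 2 by ring, add_zero, integral_inv_of_pos hd0 one_pos,
          Real.log_div one_ne_zero hd0.ne', Real.log_one, Real.log_mul (by norm_num) (by positivity),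
          Real.log_pow]
        have l8 : Real.log 8 = 3 * Real.log 2 := by
          rw [show (8 : ℝ) = 2 ^ 3 by norm_num, Real.log_pow]; norm_num
        have l4 : 2 * Real.log 2 ≤ -Real.log δ := by
          rw [← Real.log_inv, show 2 * Real.log 2 = Real.log (2 ^ 2) by rw [Real.log_pow]; norm_num]
          apply Real.log_le_log (by norm_num)
          rw [le_inv_comm₀ (by norm_num) hδ]
          linarith
        rw [abs_of_neg (Real.log_neg hδ (by linarith)), l8]
        have : 0 < c * α * δ ^ 2 := by positivity
        push_cast
        nlinarith
    _ = ∫⁻ x in Icc (-1 + 8 * δ ^ 2) 0, ENNReal.ofReal (c * α * δ ^ 2 * (1 + x)⁻¹) := by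
        rw [ofReal_integral_eq_lintegral_ofReal]
        · exact hcont.integrableOn_Icc
        · filter_upwards [ae_restrict_mem measurableSet_Icc] with x hx
          exact hnn x hx
    _ ≤ _ := by
        apply setLIntegral_mono' measurableSet_Icc
        intro x hx
        rw [Real.enorm_eq_ofReal ((hnn x hx).trans (hpt x hx))]
        exact ENNReal.ofReal_le_ofReal (hpt x hx)

lemma lower_pos {α β : ℝ} (hα : 0 < α) (hβ : 0 ≤ β) :
    ∃ c > (0 : ℝ), ∀ δ : ℝ, 0 < δ → δ < 1 / 4 → ∃ f ∈ BSet ∞ α β ∩ MSet 2,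
      ENNReal.ofReal (c * δ ^ 2 * |Real.log δ|) ≤ OmegaMain 2 f δ (jacobi α β) 1 := by
  set N := LpOn (fun x => jacobi α β x * (1 + x) ^ (-α)) ∞ (-1) 1 with hN
  have hle : N ≤ ENNReal.ofReal (2 ^ β) := by
    rw [hN]
    unfold LpOn
    rw [eLpNorm_exponent_top]
    apply eLpNormEssSup_le_of_ae_bound
    filter_upwards [ae_restrict_mem measurableSet_Icc] with x hx
    rcases hx.1.eq_or_lt with h | h
    · rw [← h]
      unfold jacobi
      rw [show (1 : ℝ) + -1 = 0 by norm_num, Real.zero_rpow hα.ne']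
      simp
      positivity
    · have hx1 : 0 < 1 + x := by linarith
      have hr : (1 + x) ^ α * (1 + x) ^ (-α) = 1 := by
        rw [← Real.rpow_add hx1]; simp
      have : jacobi α β x * (1 + x) ^ (-α) = (1 - x) ^ β := by
        unfold jacobi
        linear_combination (1 - x) ^ β * hr
      have h2 : 0 ≤ 1 - x := by linarith [hx.2]
      rw [this, Real.norm_eq_abs, abs_of_nonneg (Real.rpow_nonneg h2 _)]
      exact Real.rpow_le_rpow h2 (by linarith) hβ
  have hne : N ≠ 0 := by
    intro h0
    rw [hN] at h0
    unfold LpOn at h0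
    rw [eLpNorm_exponent_top, eLpNormEssSup_eq_zero_iff] at h0
    have := ae_mono (Measure.restrict_mono_set volume (Ioo_subset_Icc_self (a := (-1 : ℝ)) (b := 1))) h0
    have hF : ∀ᵐ x ∂(volume.restrict (Ioo (-1 : ℝ) 1)), False := by
      filter_upwards [this, ae_restrict_mem measurableSet_Ioo] with x hx hx2
      have := mul_pos (jacobi_pos α β hx2) (Real.rpow_pos_of_pos (show 0 < 1 + x by linarith [hx2.1]) (-α))
      simp only [Pi.zero_apply] at hx
      linarith
    rw [eventually_false_iff_eq_bot, ae_eq_bot, Measure.restrict_eq_zero, Real.volume_Ioo] at hF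
    norm_num at hF
  have hnt : N ≠ ⊤ := ne_top_of_le_ne_top ENNReal.ofReal_ne_top hle
  have hNr : 0 < N.toReal := ENNReal.toReal_pos hne hnt
  have hNle : N.toReal ≤ 2 ^ β := ENNReal.toReal_le_of_le_ofReal (by positivity) hle
  refine ⟨(N.toReal)⁻¹ * α / 2, by positivity, ?_⟩
  intro δ hδ hδ1
  refine ⟨fun x => (N.toReal)⁻¹ * (1 + x) ^ (-α), ⟨⟨?_, ?_⟩, ?_⟩, lower_int hα hβ (inv_pos.2 hNr) hδ hδ1⟩
  · fun_prop
  · have e : (fun x => jacobi α β x * ((N.toReal)⁻¹ * (1 + x) ^ (-α))) =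
        (N.toReal)⁻¹ • (fun x => jacobi α β x * (1 + x) ^ (-α)) := by
      ext x
      simp only [Pi.smul_apply, smul_eq_mul]
      ring
    unfold LpOn
    rw [e, eLpNorm_const_smul]
    change _ * N = 1
    rw [Real.enorm_eq_ofReal (by positivity), ENNReal.ofReal_inv_of_pos hNr, ENNReal.ofReal_toReal hnt]
    exact ENNReal.inv_mul_cancel hne hnt
  · exact (kmono_iff _).2 (convex_g hα (inv_pos.2 hNr).le)

lemma lower {α β : ℝ} (hα : 0 ≤ α) (hβ : 0 ≤ β) (hne : ¬(α = 0 ∧ β = 0)) :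
    ∃ c > (0 : ℝ), ∀ δ : ℝ, 0 < δ → δ < 1 / 4 → ∃ f ∈ BSet ∞ α β ∩ MSet 2,
      ENNReal.ofReal (c * δ ^ 2 * |Real.log δ|) ≤ OmegaMain 2 f δ (jacobi α β) 1 := by
  rcases hα.eq_or_lt with h | h
  · have hb : 0 < β := lt_of_le_of_ne hβ (fun k => hne ⟨h.symm, k.symm⟩)
    obtain ⟨c, hc, H⟩ := lower_pos hb hα
    refine ⟨c, hc, fun δ h0 h1 => ?_⟩
    obtain ⟨f, ⟨⟨hm, hn⟩, hk⟩, hf⟩ := H δ h0 h1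
    refine ⟨fun x => f (-x), ⟨⟨hm.comp measurable_neg, ?_⟩, ?_⟩, ?_⟩
    · rw [← hn, LpOn_refl]
      simp only [neg_neg, jacobi_neg]
    · exact (kmono_iff _).2 (convex_refl ((kmono_iff f).1 hk))
    · rwa [← mainOmega_eq]
  · exact lower_pos h hβ

theorem statement1 (α β : ℝ) (hα : 0 ≤ α) (hβ : 0 ≤ β) (hne : ¬(α = 0 ∧ β = 0)) :
    ∃ c₁ > (0 : ℝ), ∃ c₂ > (0 : ℝ), ∀ δ : ℝ, 0 < δ → δ < 1 / 4 →
      ENNReal.ofReal (c₁ * δ ^ 2 * |Real.log δ|) ≤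
        (⨆ f ∈ BSet ∞ α β ∩ MSet 2, omegaDT 2 f δ (jacobi α β) 1) ∧
      (⨆ f ∈ BSet ∞ α β ∩ MSet 2, omegaDT 2 f δ (jacobi α β) 1) ≤
        ENNReal.ofReal (c₂ * δ ^ 2 * |Real.log δ|) := by
  obtain ⟨c, hc, H⟩ := lower hα hβ hne
  refine ⟨c, hc, 2240 * KK α β, mul_pos (by norm_num) (KK_pos α β), fun δ h0 h1 => ⟨?_, ?_⟩⟩
  · obtain ⟨f, hf, hl⟩ := H δ h0 h1
    refine le_trans hl (le_trans ?_ (le_iSup₂ (f := fun f (_ : f ∈ BSet ∞ α β ∩ MSet 2) =>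
      omegaDT 2 f δ (jacobi α β) 1) f hf))
    unfold omegaDT
    rw [add_assoc]
    exact le_self_add
  · exact iSup₂_le fun f hf => upper hα hβ hf h0 h1
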